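/- arXiv:2511.02705 — 2 statements merged into one kernel-verified Lean document; each statement's English description precedes it below -/
import Mathlib

section
/- Let G be a consistent-form ConstrainedCC instance, 𝒟 a maximal edge-disjoint set of dangerous pairs, and C a feasible clustering of G. For each unordered pair of supernodes A, B define X⁺_{AB} = 1 if A and B lie in different clusters of C and X⁺_{AB} = 0 otherwise, and X⁻_{AB} = 1 − X⁺_{AB} (each supernode lies entirely in one cluster since C is feasible). Then (X⁺, X⁻) is a feasible solution of the constrained covering LP, and its objective value Σ_{uv} x_{uv} equals cost_G(C). In particular, the optimum value of the constrained covering LP is at most the minimum cost of a feasible clustering of G. -/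
/-! A feasible clustering is constant on supernodes and separates hostile supernodes, so the induced
0/1 values are well defined on pairs of supernodes, and the triangle constraints express that
lying in one cluster is an equivalence relation.

For a HEAP constraint, both `ac` and its partner `kl` are positive, so a violated constraint would
mean that `a`, `b`, `c` share a cluster and `k`, `l` share a cluster. But then no edge of the dangerous
pair `{ac, kl}` is cut, which merges two hostile supernodes
(`IsDangerousPair.not_both_uncut`).

The objective equals the cost because the non-diagonal pairs split into `Ep` and `En`, and on each part
the value `x` is the indicator of a mistake made by the clustering. -/

open scoped Classical

namespace CCC

/-- A Constrained Correlation Clustering instance: a partition of the unordered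
pairs of distinct vertices into positive edges `Ep` and negative edges `En`,
together with friendly constraints `F` and hostile constraints `H`. -/
structure CCInst (V : Type*) where
  Ep : Finset (Sym2 V)
  En : Finset (Sym2 V)
  F : Finset (Sym2 V)
  H : Finset (Sym2 V)
  mem_Ep_iff : ∀ e : Sym2 V, e ∈ Ep ↔ (¬ e.IsDiag ∧ e ∉ En)
  not_isDiag_of_mem_En : ∀ e ∈ En, ¬ e.IsDiag
  not_isDiag_of_mem_F : ∀ e ∈ F, ¬ e.IsDiag
  not_isDiag_of_mem_H : ∀ e ∈ H, ¬ e.IsDiag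

variable {V : Type*} [Fintype V] [DecidableEq V]

/-- `u` and `v` lie in the same supernode (connected component of `(V, F)`). -/
def sameSuper (G : CCInst V) (u v : V) : Prop :=
  Relation.ReflTransGen (fun a b => s(a, b) ∈ G.F) u v

/-- The (distinct) supernodes of `u` and `v` are hostile. -/
def hostileSuper (G : CCInst V) (u v : V) : Prop :=
  ¬ sameSuper G u v ∧ ∃ a b : V, sameSuper G u a ∧ sameSuper G v b ∧ s(a, b) ∈ G.H

/-- A clustering is feasible if it merges all friendly pairs and separates all hostile pairs. -/
def Feasible (G : CCInst V) {L : Type*} (C : V → L) : Prop :=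
  (∀ u v : V, s(u, v) ∈ G.F → C u = C v) ∧ ∀ u v : V, s(u, v) ∈ G.H → C u ≠ C v

/-- The cost of a clustering: positive edges cut plus negative edges not cut. -/
noncomputable def cost (G : CCInst V) {L : Type*} (C : V → L) : ℕ :=
  (G.Ep.filter fun e => ¬ (e.map C).IsDiag).card +
    (G.En.filter fun e => (e.map C).IsDiag).card

/-- `G` is in consistent form. -/
def ConsistentForm (G : CCInst V) : Prop :=
  (∀ u v : V, u ≠ v → sameSuper G u v → s(u, v) ∈ G.Ep) ∧
    ∀ u v : V, hostileSuper G u v → s(u, v) ∈ G.En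

/-- `G` is the consistent form of `G0`. -/
def IsConsistentFormOf (G G0 : CCInst V) : Prop :=
  G.F = G0.F ∧ G.H = G0.H ∧
    ∀ u v : V, u ≠ v →
      (sameSuper G0 u v → s(u, v) ∈ G.Ep) ∧
      (hostileSuper G0 u v → s(u, v) ∈ G.En) ∧
      (¬ sameSuper G0 u v → ¬ hostileSuper G0 u v → (s(u, v) ∈ G.Ep ↔ s(u, v) ∈ G0.Ep))

/-- `(e, f)` is a dangerous pair: `e = ab`, `f = cd` are positive edges with
`s(b) = s(c)` and `(S(a), S(d)) ∈ H`. -/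
def IsDangerousPair (G : CCInst V) (e f : Sym2 V) : Prop :=
  ∃ a b c d : V, e = s(a, b) ∧ f = s(c, d) ∧ e ∈ G.Ep ∧ f ∈ G.Ep ∧
    sameSuper G b c ∧ hostileSuper G a d

/-- The edge `e` occurs in the pair `p`. -/
def InPair (e : Sym2 V) (p : Sym2 V × Sym2 V) : Prop := e = p.1 ∨ e = p.2

/-- Every edge occurs in at most one member of `D`. -/
def EdgeDisjoint (D : Finset (Sym2 V × Sym2 V)) : Prop :=
  ∀ p ∈ D, ∀ q ∈ D, ∀ e : Sym2 V, InPair e p → InPair e q → p = q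

/-- `D` is an edge-disjoint set of dangerous pairs. -/
def DangerousFamily (G : CCInst V) (D : Finset (Sym2 V × Sym2 V)) : Prop :=
  (∀ p ∈ D, IsDangerousPair G p.1 p.2) ∧ EdgeDisjoint D

/-- `D` is a maximal edge-disjoint set of dangerous pairs. -/
def MaximalDangerous (G : CCInst V) (D : Finset (Sym2 V × Sym2 V)) : Prop :=
  DangerousFamily G D ∧
    ∀ e f : Sym2 V, IsDangerousPair G e f → EdgeDisjoint (insert (e, f) D) → (e, f) ∈ D

/-- `E_𝒟`: the set of edges occurring in members of `D`. -/
def EDset (D : Finset (Sym2 V × Sym2 V)) : Set (Sym2 V) :=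
  {e | ∃ p ∈ D, InPair e p}

/-- `f` is the partner edge `ρ(e)` of `e` in `D`. -/
def Partner (D : Finset (Sym2 V × Sym2 V)) (e f : Sym2 V) : Prop :=
  (e, f) ∈ D ∨ (f, e) ∈ D

/-- The induced edge value `x_{uv}` of an LP solution. -/
noncomputable def xval (G : CCInst V) (Xp Xn : Sym2 V → ℝ) (e : Sym2 V) : ℝ :=
  if e ∈ G.Ep then Xp e else Xn e

/-- The LP objective value `∑_{uv} x_{uv}`, summed over all unordered pairs of
distinct vertices. -/
noncomputable def lpObj (G : CCInst V) (Xp Xn : Sym2 V → ℝ) : ℝ :=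
  ∑ e ∈ Finset.univ.filter (fun e : Sym2 V => ¬ e.IsDiag), xval G Xp Xn e

/-- `(Xp, Xn)` is a feasible solution of the constrained covering LP (with
HEAP constraints coming from the dangerous pairs `D`).  The variables are
indexed by unordered pairs of vertices but must only depend on the pair of
supernodes of the endpoints. -/
structure IsLPSol (G : CCInst V) (D : Finset (Sym2 V × Sym2 V))
    (Xp Xn : Sym2 V → ℝ) : Prop where
  nonneg_p : ∀ e : Sym2 V, 0 ≤ Xp e
  nonneg_n : ∀ e : Sym2 V, 0 ≤ Xn e
  congr_p : ∀ u v u' v' : V, sameSuper G u u' → sameSuper G v v' →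
    Xp s(u, v) = Xp s(u', v')
  congr_n : ∀ u v u' v' : V, sameSuper G u u' → sameSuper G v v' →
    Xn s(u, v) = Xn s(u', v')
  same_p : ∀ u v : V, sameSuper G u v → Xp s(u, v) = 0
  same_n : ∀ u v : V, sameSuper G u v → Xn s(u, v) = 1
  host_n : ∀ u v : V, hostileSuper G u v → Xn s(u, v) = 0
  host_p : ∀ u v : V, hostileSuper G u v → Xp s(u, v) = 1
  tri_ppn : ∀ a b c : V, ¬ sameSuper G a b → ¬ sameSuper G b c → ¬ sameSuper G a c →
    1 ≤ Xp s(a, b) + Xp s(b, c) + Xn s(a, c)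
  tri_pnp : ∀ a b c : V, ¬ sameSuper G a b → ¬ sameSuper G b c → ¬ sameSuper G a c →
    1 ≤ Xp s(a, b) + Xn s(b, c) + Xp s(a, c)
  tri_npp : ∀ a b c : V, ¬ sameSuper G a b → ¬ sameSuper G b c → ¬ sameSuper G a c →
    1 ≤ Xn s(a, b) + Xp s(b, c) + Xp s(a, c)
  pair : ∀ u v : V, 1 ≤ Xp s(u, v) + Xn s(u, v)
  heap : ∀ a b c k l : V, s(a, b) ∈ G.Ep → s(b, c) ∈ G.Ep → s(a, c) ∈ G.Ep →
    ¬ sameSuper G a b → ¬ sameSuper G c b → s(a, c) ∈ EDset D →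
    Partner D s(a, c) s(k, l) →
    1 ≤ xval G Xp Xn s(a, b) + xval G Xp Xn s(b, c) + xval G Xp Xn s(k, l)

/-- `uv ∈ Ê⁺`: positive edges of the auxiliary graph `Ĝ`. -/
def hatPos (G : CCInst V) (D : Finset (Sym2 V × Sym2 V)) (Xp Xn : Sym2 V → ℝ)
    (u v : V) : Prop :=
  u ≠ v ∧ (sameSuper G u v ∨
    ((∃ a b : V, sameSuper G u a ∧ sameSuper G v b ∧ s(a, b) ∈ G.Ep ∧ s(a, b) ∉ EDset D) ∧
      Xp s(u, v) < min (Xn s(u, v)) (2 / 3)))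

/-- `uv ∈ Ê⁻`: negative edges of the auxiliary graph `Ĝ`. -/
def hatNeg (G : CCInst V) (D : Finset (Sym2 V × Sym2 V)) (Xp Xn : Sym2 V → ℝ)
    (u v : V) : Prop :=
  u ≠ v ∧ ¬ hatPos G D Xp Xn u v

/-- `Ê⁺` as a predicate on unordered pairs. -/
def hatPosE (G : CCInst V) (D : Finset (Sym2 V × Sym2 V)) (Xp Xn : Sym2 V → ℝ)
    (e : Sym2 V) : Prop :=
  ∃ u v : V, e = s(u, v) ∧ hatPos G D Xp Xn u v

/-- `Ê⁻` as a predicate on unordered pairs. -/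
def hatNegE (G : CCInst V) (D : Finset (Sym2 V × Sym2 V)) (Xp Xn : Sym2 V → ℝ)
    (e : Sym2 V) : Prop :=
  ¬ e.IsDiag ∧ ¬ hatPosE G D Xp Xn e

/-- `E^{+-} = E⁺ ∩ Ê⁻`. -/
noncomputable def Epm (G : CCInst V) (D : Finset (Sym2 V × Sym2 V)) (Xp Xn : Sym2 V → ℝ) :
    Finset (Sym2 V) :=
  G.Ep.filter fun e => hatNegE G D Xp Xn e

/-- The balanced edges `E^b ⊆ E^{+-}`. -/
noncomputable def Eb (G : CCInst V) (D : Finset (Sym2 V × Sym2 V)) (Xp Xn : Sym2 V → ℝ) :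
    Finset (Sym2 V) :=
  (Epm G D Xp Xn).filter fun e =>
    e ∈ EDset D ∧ ∀ f : Sym2 V, Partner D e f → f ∈ Epm G D Xp Xn

/-- The other flipped positive edges `E^o = E^{+-} \ E^b`. -/
noncomputable def Eo (G : CCInst V) (D : Finset (Sym2 V × Sym2 V)) (Xp Xn : Sym2 V → ℝ) :
    Finset (Sym2 V) :=
  Epm G D Xp Xn \ Eb G D Xp Xn

/-- A signed graph (given by its positive-edge relation `pos`) is pivot-safe for `G`. -/
def PivotSafe (G : CCInst V) (pos : V → V → Prop) : Prop :=
  (∀ i j : V, i ≠ j → sameSuper G i j →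
    pos i j ∧ ∀ k : V, k ≠ i → k ≠ j → (pos i k ↔ pos j k)) ∧
  ∀ i j : V, hostileSuper G i j → ¬ pos i j ∧ ∀ k : V, ¬ (pos i k ∧ pos j k)

/-- `PivotClust pos S C`: the assignment `C` (mapping every vertex of `S` to
the pivot of its cluster) is obtainable by running the pivot procedure on the
vertex set `S` of the signed graph whose positive edges are given by `pos`. -/
inductive PivotClust (pos : V → V → Prop) : Finset V → (V → V) → Prop where
  | nil (C : V → V) : PivotClust pos ∅ C
  | step (S : Finset V) (p : V) (C : V → V) (hp : p ∈ S)
      (h : PivotClust pos (S.filter fun v => ¬ (v = p ∨ pos p v)) C) :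
      PivotClust pos S (fun v => if v ∈ S ∧ (v = p ∨ pos p v) then p else C v)

/-- `T_p⁺` inside the vertex subset `W`. -/
noncomputable def Tpos (G : CCInst V) (D : Finset (Sym2 V × Sym2 V)) (Xp Xn : Sym2 V → ℝ)
    (W : Finset V) (p : V) : Finset (Sym2 V) :=
  Finset.univ.filter fun e : Sym2 V => ∃ u v : V, e = s(u, v) ∧ u ∈ W ∧ v ∈ W ∧
    hatPos G D Xp Xn u v ∧ hatPos G D Xp Xn p u ∧ hatNeg G D Xp Xn p v

/-- `T_p⁻` inside the vertex subset `W`. -/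
noncomputable def Tneg (G : CCInst V) (D : Finset (Sym2 V × Sym2 V)) (Xp Xn : Sym2 V → ℝ)
    (W : Finset V) (p : V) : Finset (Sym2 V) :=
  Finset.univ.filter fun e : Sym2 V => ∃ u v : V, e = s(u, v) ∧ u ∈ W ∧ v ∈ W ∧
    hatNeg G D Xp Xn u v ∧ hatPos G D Xp Xn p u ∧ hatPos G D Xp Xn p v

/-- `A_p⁻ = T_p⁻ \ E^b`. -/
noncomputable def Aneg (G : CCInst V) (D : Finset (Sym2 V × Sym2 V)) (Xp Xn : Sym2 V → ℝ)
    (W : Finset V) (p : V) : Finset (Sym2 V) :=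
  (Tneg G D Xp Xn W p).filter fun e => e ∉ Eb G D Xp Xn

/-- `B_p⁻ = T_p⁻ ∩ E^b`. -/
noncomputable def Bneg (G : CCInst V) (D : Finset (Sym2 V × Sym2 V)) (Xp Xn : Sym2 V → ℝ)
    (W : Finset V) (p : V) : Finset (Sym2 V) :=
  (Tneg G D Xp Xn W p).filter fun e => e ∈ Eb G D Xp Xn

/-- `(Xp, Xn)` is a feasible solution of the friendly covering LP (no hostile
constraints and no HEAP constraints). -/
structure IsFriendlyLPSol (G : CCInst V) (Xp Xn : Sym2 V → ℝ) : Prop where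
  nonneg_p : ∀ e : Sym2 V, 0 ≤ Xp e
  nonneg_n : ∀ e : Sym2 V, 0 ≤ Xn e
  congr_p : ∀ u v u' v' : V, sameSuper G u u' → sameSuper G v v' →
    Xp s(u, v) = Xp s(u', v')
  congr_n : ∀ u v u' v' : V, sameSuper G u u' → sameSuper G v v' →
    Xn s(u, v) = Xn s(u', v')
  same_p : ∀ u v : V, sameSuper G u v → Xp s(u, v) = 0
  same_n : ∀ u v : V, sameSuper G u v → Xn s(u, v) = 1
  tri_ppn : ∀ a b c : V, ¬ sameSuper G a b → ¬ sameSuper G b c → ¬ sameSuper G a c →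
    1 ≤ Xp s(a, b) + Xp s(b, c) + Xn s(a, c)
  tri_pnp : ∀ a b c : V, ¬ sameSuper G a b → ¬ sameSuper G b c → ¬ sameSuper G a c →
    1 ≤ Xp s(a, b) + Xn s(b, c) + Xp s(a, c)
  tri_npp : ∀ a b c : V, ¬ sameSuper G a b → ¬ sameSuper G b c → ¬ sameSuper G a c →
    1 ≤ Xn s(a, b) + Xp s(b, c) + Xp s(a, c)
  pair : ∀ u v : V, 1 ≤ Xp s(u, v) + Xn s(u, v)

/-- `(e, f)` is a dangerous triangle in a HostileCC instance: positive edges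
`e = ab`, `f = bc` with `ac ∈ H`. -/
def IsDangerousTriangle (G : CCInst V) (e f : Sym2 V) : Prop :=
  ∃ a b c : V, e = s(a, b) ∧ f = s(b, c) ∧ e ∈ G.Ep ∧ f ∈ G.Ep ∧ s(a, c) ∈ G.H

theorem Feasible.eq_of_sameSuper {V L : Type*} {G : CCInst V} {C : V → L}
    (hC : Feasible G C) {u v : V} (h : sameSuper G u v) : C u = C v := by
  unfold sameSuper at h
  induction h with
  | refl => rfl
  | tail _ hbc ih => exact ih.trans (hC.1 _ _ hbc)

theorem Feasible.ne_of_hostileSuper {V L : Type*} {G : CCInst V} {C : V → L}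
    (hC : Feasible G C) {u v : V} (h : hostileSuper G u v) : C u ≠ C v := by
  obtain ⟨-, a, b, ha, hb, hab⟩ := h
  rw [hC.eq_of_sameSuper ha, hC.eq_of_sameSuper hb]
  exact hC.2 a b hab

/-- A feasible clustering cuts at least one edge of every dangerous pair: otherwise the two hostile
ends would be joined through the common supernode. -/
theorem IsDangerousPair.not_both_uncut {V L : Type*} {G : CCInst V} {C : V → L}
    (hC : Feasible G C) {e f : Sym2 V} (h : IsDangerousPair G e f)
    (he : (e.map C).IsDiag) (hf : (f.map C).IsDiag) : False := by
  obtain ⟨a, b, c, d, rfl, rfl, -, -, hbc, had⟩ := h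
  simp only [Sym2.map_mk, Sym2.mk_isDiag_iff] at he hf
  exact hC.ne_of_hostileSuper had (he.trans ((hC.eq_of_sameSuper hbc).trans hf))

theorem lpObj_eq_sum_add_sum {V : Type*} [Fintype V] [DecidableEq V] (G : CCInst V)
    (Xp Xn : Sym2 V → ℝ) :
    lpObj G Xp Xn = ∑ e ∈ G.Ep, Xp e + ∑ e ∈ G.En, Xn e := by
  have hdisj : Disjoint G.Ep G.En :=
    Finset.disjoint_left.2 fun e he => ((G.mem_Ep_iff e).1 he).2
  have hsplit : Finset.univ.filter (fun e : Sym2 V => ¬ e.IsDiag) = G.Ep ∪ G.En := by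
    ext e
    have h1 := G.mem_Ep_iff e
    have h2 := G.not_isDiag_of_mem_En e
    simp only [Finset.mem_filter, Finset.mem_univ, true_and, Finset.mem_union]
    tauto
  unfold lpObj
  rw [hsplit, Finset.sum_union hdisj]
  congr 1
  · exact Finset.sum_congr rfl fun e he => if_pos he
  · exact Finset.sum_congr rfl fun e he => if_neg fun h => ((G.mem_Ep_iff e).1 h).2 he

/-- The integral solution induced by a feasible clustering `C`
(`X⁺_{AB} = 1` iff the supernodes `A` and `B` lie in different clusters, and
`X⁻ = 1 - X⁺`) is a feasible solution of the constrained covering LP, and its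
objective value equals `cost_G(C)`. -/
theorem stmt4 {V : Type*} [Fintype V] [DecidableEq V] {L : Type*} (G : CCInst V)
    (D : Finset (Sym2 V × Sym2 V))
    (hG : ConsistentForm G) (hD : MaximalDangerous G D)
    (C : V → L) (hC : Feasible G C) :
    IsLPSol G D (fun e => if (e.map C).IsDiag then (0 : ℝ) else 1)
        (fun e => if (e.map C).IsDiag then (1 : ℝ) else 0) ∧
      lpObj G (fun e => if (e.map C).IsDiag then (0 : ℝ) else 1)
        (fun e => if (e.map C).IsDiag then (1 : ℝ) else 0) = (cost G C : ℝ) := by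
  have key : ∀ {u v}, sameSuper G u v → C u = C v := hC.eq_of_sameSuper
  have hne : ∀ {u v}, hostileSuper G u v → C u ≠ C v := hC.ne_of_hostileSuper
  refine ⟨?_, ?_⟩
  · constructor
    case heap =>
      intro a b c k l hab hbc _ _ _ _ hp
      have hdanger : IsDangerousPair G s(a, c) s(k, l) ∨ IsDangerousPair G s(k, l) s(a, c) :=
        hp.imp (hD.1.1 _) (hD.1.1 _)
      have hkl : s(k, l) ∈ G.Ep := by
        rcases hdanger with ⟨_, _, _, _, -, -, he, hf, -⟩ | ⟨_, _, _, _, -, -, he, hf, -⟩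
        · exact hf
        · exact he
      have hcut : C a = C c → C k = C l → False := by
        intro hac hkl'
        rcases hdanger with h | h
        · exact h.not_both_uncut hC (by simpa using hac) (by simpa using hkl')
        · exact h.not_both_uncut hC (by simpa using hkl') (by simpa using hac)
      simp only [xval, if_pos hab, if_pos hbc, if_pos hkl, Sym2.map_mk, Sym2.mk_isDiag_iff]
      by_cases h1 : C a = C b
      · by_cases h2 : C b = C c
        · have h3 : C k ≠ C l := hcut (h1.trans h2)
          rw [if_pos h1, if_pos h2, if_neg h3]
          norm_num
        · rw [if_neg h2]
          split_ifs <;> norm_num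
      · rw [if_neg h1]
        split_ifs <;> norm_num
    case congr_p | congr_n =>
      intro u v u' v' hu hv
      simp only [Sym2.map_mk, Sym2.mk_isDiag_iff, key hu, key hv]
    case same_p | same_n =>
      intro u v h
      simp [key h]
    case host_p | host_n =>
      intro u v h
      simp [hne h]
    case nonneg_p | nonneg_n | pair =>
      intros
      split_ifs <;> norm_num
    case tri_ppn | tri_pnp | tri_npp =>
      intro a b c _ _ _
      simp only [Sym2.map_mk, Sym2.mk_isDiag_iff]
      split_ifs <;> first | (exfalso; simp_all; done) | norm_num
  · rw [lpObj_eq_sum_add_sum, cost]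
    push_cast [Finset.card_filter]
    simp only [ite_not]

end CCC
end

section
/- Let G be a consistent-form ConstrainedCC instance, 𝒟 a maximal edge-disjoint set of dangerous pairs, (X⁺, X⁻) a feasible solution of the constrained covering LP with induced edge values x, and Ĝ the auxiliary graph. Then for every pair of vertices i, j with S(i) ≠ S(j): (b) if ij ∈ E^{++} then x_{ij} < 2/3, and (c) if ij ∈ E^{-+} ∪ E^o then x_{ij} ≥ 1/3. -/
/-!
For pairs `ij` with `hatPos i j` both bounds follow from the definition of `Ê⁺`
(`Xp < min Xn (2/3)`) together with the covering constraint `Xp + Xn ≥ 1`.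

For `ij ∈ E^o` there are two cases. If `ij ∉ E_𝒟`, then `ij` itself is a positive edge outside
`E_𝒟`, so `ij` can only have been flipped because `Xp ≥ min Xn (2/3)`, and then `Xp ≥ 1/2`.
If `ij ∈ E_𝒟`, the partner edge `ρ(ij)` was not flipped, so `Xp (ρ(ij)) < 2/3`. The edges
`ij = ab` and `ρ(ij) = cd` form a dangerous pair, so the triangle inequality on the supernodes
`S(a)`, `S(b) = S(c)`, `S(d)`, with `Xn = 0` on the hostile pair `S(a), S(d)`, gives
`Xp(ab) + Xp(cd) ≥ 1` (`one_le_of_dangerous`), hence `Xp(ab) > 1/3`.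
-/

open scoped Classical

namespace CCC

variable {V : Type*} [Fintype V] [DecidableEq V]

lemma sameSuper_symm {V : Type*} {G : CCInst V} {u v : V} (h : sameSuper G u v) :
    sameSuper G v u := by
  have hs : Std.Symm (fun a b : V => s(a, b) ∈ G.F) :=
    ⟨fun a b hab => by rwa [Sym2.eq_swap]⟩
  exact Std.Symm.symm (r := Relation.ReflTransGen (fun a b : V => s(a, b) ∈ G.F)) u v h

lemma sameSuper_trans {V : Type*} {G : CCInst V} {u v w : V} (h : sameSuper G u v)
    (h' : sameSuper G v w) : sameSuper G u w :=
  Relation.ReflTransGen.trans h h'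

lemma hostileSuper_symm {V : Type*} {G : CCInst V} {u v : V} (h : hostileSuper G u v) :
    hostileSuper G v u := by
  obtain ⟨hn, a, b, ha, hb, hab⟩ := h
  exact ⟨fun h => hn (sameSuper_symm h), b, a, hb, ha, by rwa [Sym2.eq_swap]⟩

/-- Hostility depends only on the supernode of the second vertex. -/
lemma hostileSuper_congr_right {V : Type*} {G : CCInst V} {u v w : V} (h : hostileSuper G u v)
    (hvw : sameSuper G v w) : hostileSuper G u w := by
  obtain ⟨hn, a, b, ha, hb, hab⟩ := h
  exact ⟨fun h => hn (sameSuper_trans h (sameSuper_symm hvw)), a, b, ha,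
    sameSuper_trans (sameSuper_symm hvw) hb, hab⟩

lemma IsDangerousPair.symm {V : Type*} {G : CCInst V} {e f : Sym2 V}
    (h : IsDangerousPair G e f) : IsDangerousPair G f e := by
  obtain ⟨a, b, c, d, he, hf, hep, hfp, hbc, had⟩ := h
  exact ⟨d, c, b, a, hf.trans Sym2.eq_swap, he.trans Sym2.eq_swap, hfp, hep,
    sameSuper_symm hbc, hostileSuper_symm had⟩

/-- In a consistent-form instance no positive edge joins two hostile supernodes. -/
lemma not_hostileSuper_of_mem_Ep {V : Type*} {G : CCInst V} (hG : ConsistentForm G) {u v : V}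
    (h : s(u, v) ∈ G.Ep) : ¬ hostileSuper G u v :=
  fun hh => ((G.mem_Ep_iff _).1 h).2 (hG.2 u v hh)

/-- The two edges of a dangerous pair have total LP value at least one. -/
lemma one_le_of_dangerous {V : Type*} [DecidableEq V] {G : CCInst V}
    {D : Finset (Sym2 V × Sym2 V)} {Xp Xn : Sym2 V → ℝ} (hG : ConsistentForm G)
    (hsol : IsLPSol G D Xp Xn) {e f : Sym2 V} (h : IsDangerousPair G e f) :
    1 ≤ Xp e + Xp f := by
  obtain ⟨a, b, c, d, rfl, rfl, hep, hfp, hbc, had⟩ := h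
  -- `S(a)`, `S(b)`, `S(d)` are distinct: a coincidence would make `ab` or `cd` a positive
  -- edge between hostile supernodes.
  have hab : ¬ sameSuper G a b := fun h =>
    not_hostileSuper_of_mem_Ep hG hfp (hostileSuper_symm
      (hostileSuper_congr_right (hostileSuper_symm had) (sameSuper_trans h hbc)))
  have hbd : ¬ sameSuper G b d := fun h =>
    not_hostileSuper_of_mem_Ep hG hep (hostileSuper_congr_right had (sameSuper_symm h))
  have htri := hsol.tri_ppn a b d hab hbd had.1
  rw [hsol.host_n a d had, hsol.congr_p b d c d hbc Relation.ReflTransGen.refl] at htri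
  linarith

lemma Xp_lt_of_hatPosE {V : Type*} [DecidableEq V] {G : CCInst V}
    {D : Finset (Sym2 V × Sym2 V)} {Xp Xn : Sym2 V → ℝ} (hsol : IsLPSol G D Xp Xn)
    {e : Sym2 V} (h : hatPosE G D Xp Xn e) : Xp e < 2 / 3 := by
  obtain ⟨u, v, rfl, -, hs | ⟨-, hlt⟩⟩ := h
  · rw [hsol.same_p u v hs]; norm_num
  · exact hlt.trans_le (min_le_right _ _)

/-- Lemma 3.5 (b), (c).  For vertices `i, j` in distinct
supernodes: if `ij ∈ E^{++}` then `x_{ij} < 2/3`, and if `ij ∈ E^{-+} ∪ E^o`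
then `x_{ij} ≥ 1/3`. -/
theorem stmt8 {V : Type*} [Fintype V] [DecidableEq V] (G : CCInst V)
    (D : Finset (Sym2 V × Sym2 V)) (Xp Xn : Sym2 V → ℝ)
    (hG : ConsistentForm G) (hD : MaximalDangerous G D)
    (hsol : IsLPSol G D Xp Xn)
    (i j : V) (hij : ¬ sameSuper G i j) :
    (s(i, j) ∈ G.Ep ∧ hatPos G D Xp Xn i j → xval G Xp Xn s(i, j) < 2 / 3) ∧
      ((s(i, j) ∈ G.En ∧ hatPos G D Xp Xn i j) ∨ s(i, j) ∈ Eo G D Xp Xn →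
        1 / 3 ≤ xval G Xp Xn s(i, j)) := by
  refine ⟨fun ⟨hp, hh⟩ => ?_, ?_⟩
  · rw [xval, if_pos hp]
    exact Xp_lt_of_hatPosE hsol ⟨i, j, rfl, hh⟩
  rintro (⟨hn, hh⟩ | ho)
  · have hp : s(i, j) ∉ G.Ep := fun hp => ((G.mem_Ep_iff _).1 hp).2 hn
    rw [xval, if_neg hp]
    have hlt := (hh.2.resolve_left hij).2.trans_le (min_le_left _ _)
    linarith [hsol.pair i j]
  · obtain ⟨hpm, hb⟩ := Finset.mem_sdiff.1 ho
    obtain ⟨hp, hdiag, hneg⟩ := Finset.mem_filter.1 hpm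
    rw [xval, if_pos hp]
    by_cases hED : s(i, j) ∈ EDset D
    · have hex : ∃ f, Partner D s(i, j) f ∧ f ∉ Epm G D Xp Xn := by
        by_contra! hall
        exact hb (Finset.mem_filter.2 ⟨hpm, hED, hall⟩)
      obtain ⟨f, hpart, hf⟩ := hex
      have hdang : IsDangerousPair G s(i, j) f :=
        hpart.elim (fun h => hD.1.1 _ h) (fun h => (hD.1.1 _ h).symm)
      have hfp : f ∈ G.Ep := by
        obtain ⟨_, _, _, _, _, _, _, hfp, _⟩ := hdang
        exact hfp
      have hfpos : hatPosE G D Xp Xn f := by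
        by_contra hcon
        exact hf (Finset.mem_filter.2 ⟨hfp, ((G.mem_Ep_iff _).1 hfp).1, hcon⟩)
      linarith [one_le_of_dangerous hG hsol hdang, Xp_lt_of_hatPosE hsol hfpos]
    · have hge : min (Xn s(i, j)) (2 / 3) ≤ Xp s(i, j) := by
        by_contra! hlt
        exact hneg ⟨i, j, rfl, fun h => hdiag h, Or.inr ⟨⟨i, j, Relation.ReflTransGen.refl,
          Relation.ReflTransGen.refl, hp, hED⟩, hlt⟩⟩
      rcases min_le_iff.1 hge with h | h
      · linarith [hsol.pair i j]
      · linarith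

end CCC
end
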